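/- Let k, ℓ be integers with 1 ≤ ℓ ≤ k and let n ∈ ℕ. Then, as an identity of polynomials in q (with the conventions n_0 := 0 and n_k := n), Σ_{n ≥ n_{k−1} ≥ … ≥ n_1 ≥ 0} ∏_{ν=1}^{k} q^{n_{ν−1}² + n_{ν−1}} [ min(ν,ℓ) − 1 + n_ν − n_{ν−1} + 2Σ_{μ=1}^{ν−1} n_μ choose n_ν − n_{ν−1} ]_q = H_n(k,ℓ;0;q). -/

import Mathlib

noncomputable section

/-- The Gaussian binomial coefficient `[n choose r]_q` as a polynomial in `q` with integer
coefficients, defined by the q-Pascal recursion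
`[n+1 choose r+1] = [n choose r+1] + q^{n-r} [n choose r]`, `[n choose 0] = 1`,
`[0 choose r+1] = 0`. -/
def qbinom : ℕ → ℕ → Polynomial ℤ
  | _, 0 => 1
  | 0, _ + 1 => 0
  | n + 1, r + 1 => qbinom n (r + 1) + Polynomial.X ^ (n - r) * qbinom n r

/-- The Gaussian polynomial `[m choose r]_q` with integer arguments, evaluated at `q ∈ ℂ`:
it is `[m choose r]_q` if `0 ≤ r ≤ m`, and `0` otherwise. -/
def gaussP (q : ℂ) (m r : ℤ) : ℂ :=
  if 0 ≤ r ∧ r ≤ m then ((qbinom m.toNat r.toNat).map (Int.castRingHom ℂ)).eval q else 0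

/-- Accessor for a chain `0 = n_0 ≤ n_1 ≤ ⋯ ≤ n_{k-1} ≤ n_k = n` encoded by
`f : Fin (k-1) → Fin (n+1)` (the values `n_1, …, n_{k-1}`). -/
def chainN (k n : ℕ) (f : Fin (k - 1) → Fin (n + 1)) (j : ℕ) : ℕ :=
  if h : 1 ≤ j ∧ j ≤ k - 1 then (f ⟨j - 1, by omega⟩ : ℕ)
  else if j = 0 then 0 else n

/-- The polynomial `H_n(k,ℓ;b;q)`: the sum over chains `n = n_k ≥ n_{k-1} ≥ ⋯ ≥ n_1 ≥ 0` of
`∏_{j=1}^{k-1} q^{n_j² + (1-b) n_j} [n_{j+1} - n_j - bj + Σ_{r=1}^j (2 n_r + χ_{ℓ>r}) choose n_{j+1} - n_j]_q`. -/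
def HpolyP (k ℓ b : ℕ) (q : ℂ) (n : ℕ) : ℂ :=
  ∑ f ∈ Finset.univ.filter
      (fun f : Fin (k - 1) → Fin (n + 1) => ∀ i j, i ≤ j → f i ≤ f j),
    ∏ j ∈ Finset.Icc 1 (k - 1),
      q ^ (chainN k n f j ^ 2 + (1 - b) * chainN k n f j) *
        gaussP q
          ((chainN k n f (j + 1) : ℤ) - (chainN k n f j : ℤ) - (b : ℤ) * (j : ℤ)
            + ∑ r ∈ Finset.Icc 1 j, (2 * (chainN k n f r : ℤ) + if r < ℓ then 1 else 0))
          ((chainN k n f (j + 1) : ℤ) - (chainN k n f j : ℤ))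

theorem qbinom_eq_zero_of_lt (n : ℕ) : ∀ r, n < r → qbinom n r = 0 := by
  induction n with
  | zero =>
    intro r hr
    obtain ⟨r, rfl⟩ : ∃ s, r = s + 1 := ⟨r - 1, by omega⟩
    simp [qbinom]
  | succ n ih =>
    intro r hr
    obtain ⟨r, rfl⟩ : ∃ s, r = s + 1 := ⟨r - 1, by omega⟩
    simp [qbinom, ih (r + 1) (by omega), ih r (by omega)]

theorem qbinom_diag (n : ℕ) : qbinom n n = 1 := by
  induction n with
  | zero => simp [qbinom]
  | succ n ih => simp [qbinom, ih, qbinom_eq_zero_of_lt n (n + 1) (by omega)]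

theorem gaussP_diag (q : ℂ) (n : ℕ) : gaussP q n n = 1 := by
  simp [gaussP, qbinom_diag]

theorem sum_chi (ℓ : ℕ) (hℓ : 1 ≤ ℓ) (j : ℕ) :
    (∑ r ∈ Finset.Icc 1 j, (if r < ℓ then (1 : ℤ) else 0)) = min ((j : ℤ) + 1) ℓ - 1 := by
  induction j with
  | zero => simp; omega
  | succ j ih =>
    rw [Finset.sum_Icc_succ_top (by omega), ih]
    push_cast
    split_ifs <;> omega

/-- The final identity in the proof of Lemma 3.1: the `k`-fold sum expression for `β_n(1)`
equals `H_n(k,ℓ;0;q)`, as an identity of polynomials in `q` (stated for every `q ∈ ℂ`).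
Here `n_0 := 0` and `n_k := n`. -/
theorem statement12 (k ℓ : ℕ) (hℓ : 1 ≤ ℓ) (hk : ℓ ≤ k) (n : ℕ) :
    ∀ q : ℂ,
      ∑ f ∈ Finset.univ.filter
          (fun f : Fin (k - 1) → Fin (n + 1) => ∀ i j, i ≤ j → f i ≤ f j),
        ∏ ν ∈ Finset.Icc 1 k,
          q ^ (chainN k n f (ν - 1) ^ 2 + chainN k n f (ν - 1)) *
            gaussP q
              ((min ν ℓ : ℤ) - 1 + (chainN k n f ν : ℤ) - (chainN k n f (ν - 1) : ℤ)
                + 2 * ∑ μ ∈ Finset.Icc 1 (ν - 1), (chainN k n f μ : ℤ))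
              ((chainN k n f ν : ℤ) - (chainN k n f (ν - 1) : ℤ))
      = HpolyP k ℓ 0 q n := by
  intro q
  unfold HpolyP
  refine Finset.sum_congr rfl fun f _ => ?_
  obtain ⟨m, rfl⟩ : ∃ m, k = m + 1 := ⟨k - 1, by omega⟩
  have h0 : chainN (m + 1) n f 0 = 0 := by simp [chainN]
  generalize chainN (m + 1) n f = c at h0 ⊢
  rw [← Finset.Ico_add_one_right_eq_Icc, Finset.prod_eq_prod_Ico_succ_bot (by omega),
    ← Finset.prod_Ico_add' _ 1 (m + 1) 1]
  have h1 : (min ((1 : ℕ) : ℤ) (ℓ : ℤ)) - 1 = 0 := by omega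
  have hd := gaussP_diag q (c 1)
  simp only [Nat.sub_self, h0, h1, Nat.add_sub_cancel]
  simp only [← Finset.Ico_add_one_right_eq_Icc 1 m]
  simp [hd]
  refine Finset.prod_congr rfl fun j _ => ?_
  congr 2
  have := sum_chi ℓ hℓ j
  simp only [Finset.sum_add_distrib, ← Finset.mul_sum] at *
  linarith
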